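/- arXiv:1602.08143 — 2 statements merged into one kernel-verified Lean document; each statement's English description precedes it below -/
import Mathlib

section
/- Let r ∈ ℝ, s > 0, and let f : (0,∞) → ℝ be bounded and continuous. Then H_s f is differentiable on (0,∞) and for every x > 0, T_r (H_s f)(x) = f(x) + (r − s) H_s f(x). -/
/-!
On `(0,∞)` the integrand `t ^ (s - 1) * f t` is continuous and dominated by `C * t ^ (s - 1)`, which
is integrable at `0` because `s > 0`. The fundamental theorem of calculus therefore differentiates
the integral in `H_s f`, and the product rule gives `x * (H_s f)'(x) = f x - s * H_s f x`.
-/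

open MeasureTheory Set

/-- The operator `T_r`, sending `f` to `x ↦ x f'(x) + r f(x)`. -/
noncomputable def steinT (r : ℝ) (f : ℝ → ℝ) : ℝ → ℝ := fun x => x * deriv f x + r * f x

/-- The operator `H_s`, sending `f` to `x ↦ x^{-s} ∫_0^x t^{s-1} f(t) dt`. -/
noncomputable def steinH (s : ℝ) (f : ℝ → ℝ) : ℝ → ℝ :=
  fun x => x ^ (-s) * ∫ t in Set.Ioo (0 : ℝ) x, t ^ (s - 1) * f t

lemma intervalIntegrable_rpow_mul {s : ℝ} (hs : 0 < s) {f : ℝ → ℝ}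
    (hf : ContinuousOn f (Set.Ioi 0)) (hbd : ∃ C, ∀ x ∈ Set.Ioi (0 : ℝ), |f x| ≤ C)
    {x : ℝ} (hx : 0 < x) :
    IntervalIntegrable (fun t => t ^ (s - 1) * f t) volume 0 x := by
  obtain ⟨C, hC⟩ := hbd
  have h1 : IntervalIntegrable (fun t : ℝ => t ^ (s - 1)) volume 0 x :=
    intervalIntegral.intervalIntegrable_rpow' (by linarith)
  rw [intervalIntegrable_iff_integrableOn_Ioc_of_le hx.le] at h1 ⊢
  refine Integrable.mul_bdd (c := C) h1 ?_ ?_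
  · exact (hf.mono Ioc_subset_Ioi_self).aestronglyMeasurable measurableSet_Ioc
  · filter_upwards [ae_restrict_mem measurableSet_Ioc] with t ht
    exact hC t ht.1

lemma hasDerivAt_steinH {s : ℝ} (hs : 0 < s) {f : ℝ → ℝ}
    (hf : ContinuousOn f (Set.Ioi 0)) (hbd : ∃ C, ∀ x ∈ Set.Ioi (0 : ℝ), |f x| ≤ C)
    {x : ℝ} (hx : 0 < x) :
    HasDerivAt (steinH s f) ((f x - s * steinH s f x) / x) x := by
  have hcont : ContinuousOn (fun t : ℝ => t ^ (s - 1) * f t) (Set.Ioi 0) :=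
    (continuousOn_id.rpow_const fun t ht => Or.inl (ne_of_gt ht)).mul hf
  have hFTC : HasDerivAt (fun y => ∫ t in (0 : ℝ)..y, t ^ (s - 1) * f t)
      (x ^ (s - 1) * f x) x :=
    intervalIntegral.integral_hasDerivAt_right (intervalIntegrable_rpow_mul hs hf hbd hx)
      (hcont.stronglyMeasurableAtFilter isOpen_Ioi x hx)
      (hcont.continuousAt (Ioi_mem_nhds hx))
  have hset : ∀ y : ℝ, 0 < y → (∫ t in Set.Ioo (0 : ℝ) y, t ^ (s - 1) * f t)
      = ∫ t in (0 : ℝ)..y, t ^ (s - 1) * f t := fun y hy => by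
    rw [intervalIntegral.integral_of_le hy.le, integral_Ioc_eq_integral_Ioo]
  have hprod := (Real.hasDerivAt_rpow_const (p := -s) (Or.inl hx.ne')).mul hFTC
  refine (hprod.congr_of_eventuallyEq ?_).congr_deriv ?_
  · filter_upwards [Ioi_mem_nhds hx] with y hy
    simp only [steinH, hset y hy, Pi.mul_apply]
  · have e1 : x ^ (-s - 1) = x ^ (-s) / x := Real.rpow_sub_one hx.ne' _
    have e2 : x ^ (-s) * x ^ (s - 1) = 1 / x := by
      rw [← Real.rpow_add hx, show -s + (s - 1) = -1 by ring, Real.rpow_neg_one, one_div]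
    simp only [steinH, hset x hx]
    rw [e1, ← mul_assoc (x ^ (-s)), e2]
    ring

/-- For bounded continuous `f` on `(0,∞)`, `H_s f` is differentiable on
`(0,∞)` and `T_r(H_s f)(x) = f(x) + (r - s) H_s f(x)` for all `x > 0`. -/
theorem stmt6
    (r s : ℝ) (hs : 0 < s)
    (f : ℝ → ℝ) (hf : ContinuousOn f (Set.Ioi 0))
    (hbd : ∃ C, ∀ x ∈ Set.Ioi (0 : ℝ), |f x| ≤ C) :
    ∀ x ∈ Set.Ioi (0 : ℝ),
      DifferentiableAt ℝ (steinH s f) x ∧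
      steinT r (steinH s f) x = f x + (r - s) * steinH s f x := by
  intro x hx
  have h := hasDerivAt_steinH hs hf hbd hx
  have hx0 : x ≠ 0 := ne_of_gt hx
  refine ⟨h.differentiableAt, ?_⟩
  rw [steinT, h.deriv, mul_div_cancel₀ _ hx0]
  ring
end

section
/- Let r_1, …, r_n > 0 and let f : (0,∞) → ℝ be n times continuously differentiable such that for each k = 0, 1, …, n the function x ↦ x^k f^{(k)}(x) is bounded on (0,1]. Then for every x > 0, (H_{r_1}∘⋯∘H_{r_n})((T_{r_1}∘⋯∘T_{r_n}) f)(x) = f(x); that is, H_{r_1,…,r_n} := H_{r_1}∘⋯∘H_{r_n} is a left inverse of B_{r_1,…,r_n} := T_{r_1}∘⋯∘T_{r_n} on such functions. -/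
/-!
On `(0, ∞)` the operators `T_r` commute, so `T_{r₁} ∘ ⋯ ∘ T_{rₙ}` may be rewritten with `T_{r₁}`
innermost; the operators `H_{rₙ}, …, H_{r₁}` then cancel their partners one after the other.
Each cancellation `H_s (T_s f) = f` is the fundamental theorem of calculus applied to
`t ^ s * f t`, whose derivative is `t ^ (s - 1) * T_s f t` and which vanishes at `0+` because `f`
is bounded near `0` and `s > 0`. The growth hypothesis passes from `f` to `T_r f`, with one
derivative fewer, since `(T_r f)^{(k)} = T_{r + k} (f^{(k)})`.
-/

open MeasureTheory Set

/-- The iterated operator `B_{r₁,…,rₙ} = T_{r₁} ∘ ⋯ ∘ T_{rₙ}`. -/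
noncomputable def steinB {n : ℕ} (r : Fin n → ℝ) (f : ℝ → ℝ) : ℝ → ℝ :=
  (List.ofFn r).foldr steinT f

/-- The iterated operator `H_{r₁,…,rₙ} = H_{r₁} ∘ ⋯ ∘ H_{rₙ}`. -/
noncomputable def steinHComp {n : ℕ} (r : Fin n → ℝ) (f : ℝ → ℝ) : ℝ → ℝ :=
  (List.ofFn r).foldr steinH f

open Filter Topology

/-- The function class of the theorem: `f` is `C^m` on `(0, ∞)` and `x ^ k * f^{(k)} x` is bounded
on `(0, 1]` for all `k ≤ m`. -/
def SteinClass (m : ℕ) (f : ℝ → ℝ) : Prop :=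
  ContDiffOn ℝ m f (Ioi 0) ∧
    ∀ k ≤ m, ∃ C, ∀ x ∈ Ioc (0 : ℝ) 1, |x ^ k * iteratedDeriv k f x| ≤ C

lemma steinT_congr {r : ℝ} {f g : ℝ → ℝ} (h : EqOn f g (Ioi 0)) :
    EqOn (steinT r f) (steinT r g) (Ioi 0) := by
  intro x hx
  have h1 : f =ᶠ[𝓝 x] g := h.eventuallyEq_of_mem (isOpen_Ioi.mem_nhds hx)
  simp only [steinT, h1.deriv_eq, h hx]

lemma steinH_congr {s : ℝ} {f g : ℝ → ℝ} (h : EqOn f g (Ioi 0)) :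
    EqOn (steinH s f) (steinH s g) (Ioi 0) := by
  intro x _
  simp only [steinH]
  congr 1
  refine setIntegral_congr_fun measurableSet_Ioo fun t ht => ?_
  simp only [h (mem_Ioi.2 ht.1)]

lemma foldr_steinH_congr (l : List ℝ) {f g : ℝ → ℝ} (h : EqOn f g (Ioi 0)) :
    EqOn (l.foldr steinH f) (l.foldr steinH g) (Ioi 0) := by
  induction l with
  | nil => exact h
  | cons a l ih => exact steinH_congr ih

lemma contDiffOn_deriv_Ioi {m : ℕ} {f : ℝ → ℝ} (hf : ContDiffOn ℝ (m + 1 : ℕ) f (Ioi 0)) :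
    ContDiffOn ℝ m (deriv f) (Ioi 0) :=
  hf.deriv_of_isOpen isOpen_Ioi (by push_cast; exact le_rfl)

lemma differentiableAt_of_contDiffOn_Ioi {m : ℕ} {f : ℝ → ℝ}
    (hf : ContDiffOn ℝ (m + 1 : ℕ) f (Ioi 0)) {x : ℝ} (hx : x ∈ Ioi (0 : ℝ)) :
    DifferentiableAt ℝ f x :=
  (hf.contDiffAt (isOpen_Ioi.mem_nhds hx)).differentiableAt (by simp)

lemma contDiffOn_steinT {m : ℕ} {r : ℝ} {f : ℝ → ℝ}
    (hf : ContDiffOn ℝ (m + 1 : ℕ) f (Ioi 0)) : ContDiffOn ℝ m (steinT r f) (Ioi 0) :=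
  (contDiffOn_id.mul (contDiffOn_deriv_Ioi hf)).add
    (contDiffOn_const.mul (hf.of_le (by exact_mod_cast Nat.le_succ m)))

lemma deriv_steinT {r : ℝ} {f : ℝ → ℝ} (hf : ContDiffOn ℝ (2 : ℕ) f (Ioi 0)) :
    EqOn (deriv (steinT r f)) (steinT (r + 1) (deriv f)) (Ioi 0) := by
  intro x hx
  have h1 := (differentiableAt_of_contDiffOn_Ioi (m := 1) hf hx).hasDerivAt
  have h2 := (differentiableAt_of_contDiffOn_Ioi (m := 0)
    (contDiffOn_deriv_Ioi (m := 1) hf) hx).hasDerivAt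
  have h3 : HasDerivAt (steinT r f) (1 * deriv f x + x * deriv (deriv f) x + r * deriv f x) x :=
    ((hasDerivAt_id x).mul h2).add (h1.const_mul r)
  rw [h3.deriv]
  simp only [steinT]
  ring

lemma steinT_comm {r s : ℝ} {f : ℝ → ℝ} (hf : ContDiffOn ℝ (2 : ℕ) f (Ioi 0)) :
    EqOn (steinT r (steinT s f)) (steinT s (steinT r f)) (Ioi 0) := by
  intro x hx
  have h1 := deriv_steinT (r := r) hf hx
  have h2 := deriv_steinT (r := s) hf hx
  have e (p q : ℝ) : steinT p (steinT q f) x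
      = x * deriv (steinT q f) x + p * (x * deriv f x + q * f x) := rfl
  rw [e, e, h1, h2]
  simp only [steinT]
  ring

lemma iteratedDeriv_steinT (k : ℕ) : ∀ {r : ℝ} {f : ℝ → ℝ},
    ContDiffOn ℝ (k + 1 : ℕ) f (Ioi 0) → ∀ x ∈ Ioi (0 : ℝ),
      iteratedDeriv k (steinT r f) x
        = x * iteratedDeriv (k + 1) f x + (r + k) * iteratedDeriv k f x := by
  induction k with
  | zero => intro r f _ x _; simp [steinT]
  | succ k ih =>
    intro r f hf x hx
    have h2 : ContDiffOn ℝ (2 : ℕ) f (Ioi 0) := hf.of_le (by norm_cast; lia)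
    rw [iteratedDeriv_succ', (deriv_steinT h2).iteratedDeriv_of_isOpen isOpen_Ioi k hx,
      ih (contDiffOn_deriv_Ioi hf) x hx, ← iteratedDeriv_succ', ← iteratedDeriv_succ']
    push_cast
    ring

lemma SteinClass.map_steinT {m : ℕ} {r : ℝ} {f : ℝ → ℝ} (hf : SteinClass (m + 1) f) :
    SteinClass m (steinT r f) := by
  refine ⟨contDiffOn_steinT hf.1, fun k hk => ?_⟩
  obtain ⟨C, hC⟩ := hf.2 (k + 1) (by lia)
  obtain ⟨D, hD⟩ := hf.2 k (by lia)
  refine ⟨C + |r + k| * D, fun x hx => ?_⟩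
  rw [iteratedDeriv_steinT k (hf.1.of_le (by norm_cast; lia)) x hx.1]
  calc |x ^ k * (x * iteratedDeriv (k + 1) f x + (r + k) * iteratedDeriv k f x)|
      = |x ^ (k + 1) * iteratedDeriv (k + 1) f x + (r + k) * (x ^ k * iteratedDeriv k f x)| := by
        congr 1; ring
    _ ≤ |x ^ (k + 1) * iteratedDeriv (k + 1) f x| + |(r + k) * (x ^ k * iteratedDeriv k f x)| :=
        abs_add_le _ _
    _ ≤ C + |r + k| * D := by
        rw [abs_mul (r + k)]
        gcongr
        exacts [hC x hx, hD x hx]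

lemma contDiffOn_foldr_steinT (l : List ℝ) : ∀ {m : ℕ} {f : ℝ → ℝ},
    ContDiffOn ℝ (m + l.length : ℕ) f (Ioi 0) →
      ContDiffOn ℝ m (l.foldr steinT f) (Ioi 0) := by
  induction l with
  | nil => intro m f hf; exact hf
  | cons a l ih =>
    intro m f hf
    refine contDiffOn_steinT (ih (m := m + 1) ?_)
    convert hf using 2
    simp only [List.length_cons]
    lia

lemma steinT_foldr_comm (a : ℝ) (l : List ℝ) {f : ℝ → ℝ}
    (hf : ContDiffOn ℝ (l.length + 1 : ℕ) f (Ioi 0)) :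
    EqOn (steinT a (l.foldr steinT f)) (l.foldr steinT (steinT a f)) (Ioi 0) := by
  induction l with
  | nil => exact fun _ _ => rfl
  | cons b l ih =>
    have h2 : ContDiffOn ℝ (2 : ℕ) (l.foldr steinT f) (Ioi 0) := by
      refine contDiffOn_foldr_steinT l (hf.of_le ?_)
      norm_cast
      simp only [List.length_cons]
      lia
    refine (steinT_comm h2).trans (steinT_congr (ih (hf.of_le ?_)))
    norm_cast
    simp only [List.length_cons]
    lia

lemma SteinClass.exists_bound_Ioc {m : ℕ} {f : ℝ → ℝ} (hf : SteinClass m f) (x : ℝ) :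
    ∃ C, ∀ t ∈ Ioc 0 x, |f t| ≤ C := by
  obtain ⟨C, hC⟩ := hf.2 0 (Nat.zero_le _)
  obtain ⟨D, hD⟩ := (isCompact_Icc (a := (1 : ℝ)) (b := x)).exists_bound_of_continuousOn
    (hf.1.continuousOn.mono fun t ht => lt_of_lt_of_le one_pos ht.1)
  refine ⟨max C D, fun t ht => ?_⟩
  rcases le_total t 1 with h | h
  · exact le_max_of_le_left (by simpa using hC t ⟨ht.1, h⟩)
  · exact le_max_of_le_right (hD t ⟨h, ht.2⟩)

lemma steinH_steinT {s : ℝ} (hs : 0 < s) {m : ℕ} {f : ℝ → ℝ} (hf : SteinClass (m + 1) f) :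
    EqOn (steinH s (steinT s f)) f (Ioi 0) := by
  intro x hx
  have hx0 : 0 < x := hx
  have hderiv : ∀ t ∈ Ioi (0 : ℝ),
      HasDerivAt (fun t => t ^ s * f t) (t ^ (s - 1) * steinT s f t) t := by
    intro t ht
    have ht0 : 0 < t := ht
    have h1 := (Real.hasDerivAt_rpow_const (p := s) (Or.inl ht0.ne')).mul
      (differentiableAt_of_contDiffOn_Ioi hf.1 ht).hasDerivAt
    refine h1.congr_deriv ?_
    have h2 : t ^ s = t ^ (s - 1) * t := by
      rw [Real.rpow_sub_one ht0.ne']; field_simp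
    rw [h2, steinT]
    ring
  have hint : IntervalIntegrable (fun t => t ^ (s - 1) * steinT s f t) volume 0 x := by
    obtain ⟨C, hC⟩ := (hf.map_steinT (r := s)).exists_bound_Ioc x
    have h1 : IntervalIntegrable (fun t : ℝ => t ^ (s - 1)) volume 0 x :=
      intervalIntegral.intervalIntegrable_rpow' (by linarith)
    rw [intervalIntegrable_iff_integrableOn_Ioc_of_le hx0.le] at h1 ⊢
    refine Integrable.mul_bdd (c := C) h1 ?_ ?_
    · exact (((hf.map_steinT (r := s)).1.continuousOn).mono fun t ht => ht.1).aestronglyMeasurable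
        measurableSet_Ioc
    · exact (ae_restrict_iff' measurableSet_Ioc).2 (Eventually.of_forall hC)
  have hzero : Tendsto (fun t => t ^ s * f t) (𝓝[>] 0) (𝓝 0) := by
    obtain ⟨C, hC⟩ := hf.exists_bound_Ioc 1
    have h1 : Tendsto (fun t : ℝ => t ^ s) (𝓝[>] 0) (𝓝 0) := by
      have := (Real.continuousAt_rpow_const 0 s (Or.inr hs.le)).tendsto
      rw [Real.zero_rpow hs.ne'] at this
      exact this.mono_left nhdsWithin_le_nhds
    refine h1.zero_mul_isBoundedUnder_le ⟨C, ?_⟩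
    rw [eventually_map]
    filter_upwards [Ioc_mem_nhdsGT (zero_lt_one (α := ℝ))] with t ht
    exact hC t ht
  have hend : Tendsto (fun t => t ^ s * f t) (𝓝[<] x) (𝓝 (x ^ s * f x)) :=
    (hderiv x hx).continuousAt.tendsto.mono_left nhdsWithin_le_nhds
  have hFTC := intervalIntegral.integral_eq_sub_of_hasDerivAt_of_tendsto hx0
    (fun t ht => hderiv t ht.1) hint hzero hend
  rw [intervalIntegral.integral_of_le hx0.le, integral_Ioc_eq_integral_Ioo, sub_zero] at hFTC
  rw [steinH, hFTC, ← mul_assoc, ← Real.rpow_add hx0, neg_add_cancel, Real.rpow_zero, one_mul]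

lemma foldr_steinH_foldr_steinT (l : List ℝ) (hl : ∀ a ∈ l, 0 < a) : ∀ {f : ℝ → ℝ},
    SteinClass l.length f → EqOn (l.foldr steinH (l.foldr steinT f)) f (Ioi 0) := by
  induction l with
  | nil => exact fun _ _ _ => rfl
  | cons a l ih =>
    intro f hf
    have h1 := foldr_steinH_congr l (steinT_foldr_comm a l hf.1)
    have h2 := ih (fun b hb => hl b (List.mem_cons_of_mem a hb)) (hf.map_steinT (r := a))
    exact (steinH_congr (h1.trans h2)).trans (steinH_steinT (hl a List.mem_cons_self) hf)

/-- For `f` n-times continuously differentiable on `(0,∞)` with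
`x ↦ x^k f^{(k)}(x)` bounded on `(0,1]` for `k = 0,…,n`, we have
`H_{r₁,…,rₙ}(B_{r₁,…,rₙ} f)(x) = f(x)` for all `x > 0`:  `H_{r₁,…,rₙ}` is a left inverse
of `B_{r₁,…,rₙ}` on such functions. -/
theorem stmt8
    {n : ℕ} (r : Fin n → ℝ) (hr : ∀ i, 0 < r i)
    (f : ℝ → ℝ) (hf : ContDiffOn ℝ n f (Set.Ioi 0))
    (hbd : ∀ k ≤ n, ∃ C, ∀ x ∈ Set.Ioc (0 : ℝ) 1, |x ^ k * iteratedDeriv k f x| ≤ C) :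
    ∀ x ∈ Set.Ioi (0 : ℝ), steinHComp r (steinB r f) x = f x := by
  refine foldr_steinH_foldr_steinT (List.ofFn r) ?_ ?_
  · intro a ha
    obtain ⟨i, rfl⟩ := (List.mem_ofFn' r a).1 ha
    exact hr i
  · rw [List.length_ofFn]
    exact ⟨hf, hbd⟩
end
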